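/- Let X be a metric space, let m : [0,∞) → [0,∞) be a nondecreasing concave function, let D ⊆ X be a Borel set, and let v, v_ε : X → ℝ be Borel measurable functions with 0 ≤ v ≤ 1 and 0 ≤ v_ε ≤ 1 such that |v_ε(x) − v_ε(y)| ≤ m(d(x,y)) for all x, y ∈ X and v(x) = v_ε(x) for all x ∉ D. Let γ and μ be Borel probability measures on X and let π be a coupling of γ and μ with (x,y) ↦ d(x,y) integrable with respect to π and ∫_{X×X} d(x,y) dπ(x,y) ≤ φ. Then |∫ v dγ − ∫ v dμ| ≤ m(φ) + γ(D) + μ(D). -/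

import Mathlib

/-!
The difference splits as `(∫ v dγ - ∫ vε dγ) + (∫ vε dγ - ∫ vε dμ) + (∫ vε dμ - ∫ v dμ)`. The outer
terms are at most `γ D` and `μ D` because `|v - vε|` is dominated by the indicator of `D`
(`abs_integral_sub_le_measure`). By the marginal conditions the middle term is
`∫ (vε x - vε y) dπ`, which is bounded by `m (∫ d dπ) ≤ m φ` through Jensen's inequality.

A concave `m` on `[0, ∞)` may jump at `0`, so Mathlib's Jensen inequality, which asks for continuity
on a closed set, does not apply. Instead the
integrand is dominated directly by a supporting line of `m` at the mean distance
(`exists_supporting_line`) when the mean is positive; when it is zero, `d = 0` almost surely.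
-/

open MeasureTheory

/-- A concave function on `[0, ∞)` lies below an affine function touching it at a given interior
point. -/
lemma exists_supporting_line {m : ℝ → ℝ} (hm : ConcaveOn ℝ (Set.Ici 0) m) {a : ℝ} (ha : 0 < a) :
    ∃ k : ℝ, ∀ t, 0 ≤ t → m t ≤ m a + k * (t - a) := by
  have hf : ConvexOn ℝ (Set.Ici 0) (-m) := hm.neg
  have hai : a ∈ interior (Set.Ici (0 : ℝ)) := by simpa using ha
  refine ⟨-derivWithin (-m) (Set.Ioi a) a, fun t ht => ?_⟩
  rcases lt_trichotomy a t with h | rfl | h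
  · have h1 := hf.rightDeriv_le_slope_of_mem_interior hai (Set.mem_Ici.2 ht) h
    rw [slope_def_field, le_div_iff₀ (sub_pos.2 h)] at h1
    simp only [Pi.neg_apply] at h1
    linarith
  · simp
  · have h1 := (hf.slope_le_leftDeriv_of_mem_interior (Set.mem_Ici.2 ht) hai h).trans
      (hf.leftDeriv_le_rightDeriv_of_mem_interior hai)
    rw [slope_def_field, div_le_iff₀ (sub_pos.2 h)] at h1
    simp only [Pi.neg_apply] at h1
    linarith

/-- Jensen-type bound: a function dominated by `m ∘ d`, with `m` concave on `[0, ∞)`, has integral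
at most `m (∫ d)`. Continuity of `m` at `0` and integrability of `m ∘ d` are not assumed. -/
lemma integral_le_of_le_concave {Ω : Type*} [MeasurableSpace Ω] {P : Measure Ω}
    [IsProbabilityMeasure P] {m : ℝ → ℝ} (hm : ConcaveOn ℝ (Set.Ici 0) m) {d g : Ω → ℝ}
    (hd0 : ∀ ω, 0 ≤ d ω) (hd : Integrable d P) (hg : Integrable g P) (hgd : ∀ ω, g ω ≤ m (d ω)) :
    ∫ ω, g ω ∂P ≤ m (∫ ω, d ω ∂P) := by
  rcases (integral_nonneg hd0 : 0 ≤ ∫ ω, d ω ∂P).eq_or_lt with h | h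
  · have hz : d =ᵐ[P] 0 := (integral_eq_zero_iff_of_nonneg hd0 hd).1 h.symm
    rw [← h]
    calc ∫ ω, g ω ∂P ≤ ∫ _, m 0 ∂P := by
          refine integral_mono_ae hg (integrable_const _) ?_
          filter_upwards [hz] with ω hω
          simpa [hω] using hgd ω
      _ = m 0 := by simp
  · obtain ⟨k, hk⟩ := exists_supporting_line hm h
    set a := ∫ ω, d ω ∂P with ha
    have hi : Integrable (fun ω => k * (d ω - a)) P :=
      (hd.sub (integrable_const a)).const_mul k
    calc ∫ ω, g ω ∂P ≤ ∫ ω, (m a + k * (d ω - a)) ∂P :=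
          integral_mono hg ((integrable_const _).add hi) fun ω => (hgd ω).trans (hk _ (hd0 ω))
      _ = m a := by
          rw [integral_add (integrable_const _) hi, integral_const_mul,
            integral_sub hd (integrable_const _)]
          simp [ha]

lemma integrable_of_mem_unit {Ω : Type*} [MeasurableSpace Ω] (P : Measure Ω)
    [IsProbabilityMeasure P] {f : Ω → ℝ} (hf : Measurable f) (h0 : ∀ x, 0 ≤ f x)
    (h1 : ∀ x, f x ≤ 1) : Integrable f P :=
  Integrable.of_bound hf.aestronglyMeasurable 1
    (Filter.Eventually.of_forall fun x => by rw [Real.norm_eq_abs, abs_of_nonneg (h0 x)]; exact h1 x)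

lemma abs_integral_sub_le_measure {Ω : Type*} [MeasurableSpace Ω] (P : Measure Ω)
    [IsProbabilityMeasure P] {D : Set Ω} (hD : MeasurableSet D) {f g : Ω → ℝ}
    (hf : Measurable f) (hg : Measurable g) (hf0 : ∀ x, 0 ≤ f x) (hf1 : ∀ x, f x ≤ 1)
    (hg0 : ∀ x, 0 ≤ g x) (hg1 : ∀ x, g x ≤ 1) (h : ∀ x ∉ D, f x = g x) :
    |(∫ x, f x ∂P) - ∫ x, g x ∂P| ≤ (P D).toReal := by
  have hfi := integrable_of_mem_unit P hf hf0 hf1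
  have hgi := integrable_of_mem_unit P hg hg0 hg1
  rw [← integral_sub hfi hgi]
  calc |∫ x, (f x - g x) ∂P| ≤ ∫ x, |f x - g x| ∂P := abs_integral_le_integral_abs
    _ ≤ ∫ x, D.indicator (fun _ => (1 : ℝ)) x ∂P := by
        refine integral_mono (hfi.sub hgi).abs ((integrable_const _).indicator hD) fun x => ?_
        by_cases hx : x ∈ D
        · simp only [Set.indicator_of_mem hx]
          rw [abs_le]
          constructor <;> linarith [hf0 x, hf1 x, hg0 x, hg1 x]
        · simp [hx, h x hx]
    _ = (P D).toReal := by
        rw [integral_indicator_const _ hD]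
        simp [Measure.real]

/-- splitting estimate — if `v` agrees off `D` with a `[0,1]`-valued
function `vε` having concave nondecreasing modulus of continuity `m`, and `π` is a
coupling of `γ` and `μ` with transport cost at most `φ`, then the expectations of `v`
under `γ` and `μ` differ by at most `m φ + γ D + μ D`. -/
theorem stmt_16 {X : Type*} [MetricSpace X] [MeasurableSpace X] [BorelSpace X]
    (m : ℝ → ℝ) (hm_nonneg : ∀ t, 0 ≤ t → 0 ≤ m t)
    (hm_mono : MonotoneOn m (Set.Ici 0)) (hm_conc : ConcaveOn ℝ (Set.Ici 0) m)
    (D : Set X) (hD : MeasurableSet D)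
    (v vε : X → ℝ) (hv_meas : Measurable v) (hvε_meas : Measurable vε)
    (hv0 : ∀ x, 0 ≤ v x) (hv1 : ∀ x, v x ≤ 1)
    (hvε0 : ∀ x, 0 ≤ vε x) (hvε1 : ∀ x, vε x ≤ 1)
    (hmod : ∀ x y : X, |vε x - vε y| ≤ m (dist x y))
    (heq : ∀ x ∉ D, v x = vε x)
    (γ μ : Measure X) [IsProbabilityMeasure γ] [IsProbabilityMeasure μ]
    (π : Measure (X × X)) [IsProbabilityMeasure π]
    (hπ1 : π.map Prod.fst = γ) (hπ2 : π.map Prod.snd = μ)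
    (hdint : Integrable (fun p : X × X => dist p.1 p.2) π)
    (φ : ℝ) (hφ : ∫ p : X × X, dist p.1 p.2 ∂π ≤ φ) :
    |(∫ x, v x ∂γ) - ∫ x, v x ∂μ| ≤ m φ + (γ D).toReal + (μ D).toReal := by
  have hγ := abs_integral_sub_le_measure γ hD hv_meas hvε_meas hv0 hv1 hvε0 hvε1 heq
  have hμ := abs_integral_sub_le_measure μ hD hv_meas hvε_meas hv0 hv1 hvε0 hvε1 heq
  have hi1 : Integrable (fun p : X × X => vε p.1) π :=
    integrable_of_mem_unit π (hvε_meas.comp measurable_fst) (fun _ => hvε0 _) fun _ => hvε1 _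
  have hi2 : Integrable (fun p : X × X => vε p.2) π :=
    integrable_of_mem_unit π (hvε_meas.comp measurable_snd) (fun _ => hvε0 _) fun _ => hvε1 _
  have e1 : ∫ x, vε x ∂γ = ∫ p, vε p.1 ∂π := by
    rw [← hπ1, integral_map measurable_fst.aemeasurable hvε_meas.aestronglyMeasurable]
  have e2 : ∫ x, vε x ∂μ = ∫ p, vε p.2 ∂π := by
    rw [← hπ2, integral_map measurable_snd.aemeasurable hvε_meas.aestronglyMeasurable]
  have hmid : |(∫ x, vε x ∂γ) - ∫ x, vε x ∂μ| ≤ m φ := by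
    rw [e1, e2, ← integral_sub hi1 hi2]
    have hd : 0 ≤ ∫ p : X × X, dist p.1 p.2 ∂π := integral_nonneg fun _ => dist_nonneg
    calc |∫ p : X × X, (vε p.1 - vε p.2) ∂π| ≤ ∫ p : X × X, |vε p.1 - vε p.2| ∂π :=
          abs_integral_le_integral_abs
      _ ≤ m (∫ p : X × X, dist p.1 p.2 ∂π) :=
          integral_le_of_le_concave hm_conc (fun _ => dist_nonneg) hdint (hi1.sub hi2).abs
            fun p => hmod p.1 p.2
      _ ≤ m φ := hm_mono hd (hd.trans hφ) hφ
  rw [abs_le] at *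
  constructor <;> linarith [hγ.1, hγ.2, hμ.1, hμ.2, hmid.1, hmid.2]
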